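/- Let ψ : ℝ → [0,∞) be symmetric (ψ(r) = ψ(−r) for all r) and uniformly convex with modulus δ₀ : [0,∞) → [0,∞) nondecreasing with δ₀(0) = 0, i.e., for all α ∈ [0,1] and r, r' ∈ ℝ, αψ(r) + (1−α)ψ(r') − ψ(αr + (1−α)r') ≥ α(1−α)δ₀(|r−r'|²). Let μ be a Borel probability measure on ℝ with finite mean c̄ := ∫c dμ(c) that is symmetric about c̄ (the law of c − c̄ equals the law of c̄ − c), and assume ∫ψ(t−c)dμ(c) < ∞ for all t ∈ ℝ. Then for every t ∈ ℝ, ∫ψ(t−c)dμ(c) − ∫ψ(c̄−c)dμ(c) ≥ (1/4)·δ₀(4(t−c̄)²); in particular c̄ minimizes t ↦ ∫ψ(t−c)dμ(c). -/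

import Mathlib

open MeasureTheory

/-!
Reflecting `t` through the centre of symmetry `m` does not change the risk, and `m` is the midpoint
of `t` and its reflection. The risk inherits the midpoint convexity gap of the loss by integration,
so its value at `m` lies below its common value at the two reflected points by at least that gap.
-/

/-- The risk of the decision `t`: the expected loss `ψ (t - c)` when `c` is drawn from `μ`. -/
noncomputable def risk {E : Type*} [Sub E] [MeasurableSpace E] (ψ : E → ℝ) (μ : Measure E)
    (t : E) : ℝ :=
  ∫ c, ψ (t - c) ∂μ

section Symmetric

variable {G : Type*} [AddCommGroup G] [MeasurableSpace G] [MeasurableAdd G] [MeasurableNeg G]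
  {μ : Measure G} {m : G}

theorem integral_comp_sub_right_eq_sub_left {F : Type*} [NormedAddCommGroup F] [NormedSpace ℝ F]
    (hμ : μ.map (fun c => c - m) = μ.map (fun c => m - c)) (f : G → F) :
    ∫ c, f (c - m) ∂μ = ∫ c, f (m - c) ∂μ :=
  calc ∫ c, f (c - m) ∂μ = ∫ y, f y ∂μ.map (fun c => c - m) :=
        (integral_map_equiv (MeasurableEquiv.subRight m) f).symm
    _ = ∫ y, f y ∂μ.map (fun c => m - c) := by rw [hμ]
    _ = ∫ c, f (m - c) ∂μ := integral_map_equiv (MeasurableEquiv.subLeft m) f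

theorem risk_pointReflection {ψ : G → ℝ} (hψ : Function.Even ψ)
    (hμ : μ.map (fun c => c - m) = μ.map (fun c => m - c)) (t : G) :
    risk ψ μ (Equiv.pointReflection m t) = risk ψ μ t :=
  calc ∫ c, ψ (Equiv.pointReflection m t - c) ∂μ = ∫ c, ψ (t - m + (c - m)) ∂μ := by
        congr with c
        rw [← hψ, Equiv.pointReflection_apply, vsub_eq_sub, vadd_eq_add]
        congr 1
        abel
    _ = ∫ c, ψ (t - m + (m - c)) ∂μ :=
        integral_comp_sub_right_eq_sub_left hμ fun y => ψ (t - m + y)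
    _ = ∫ c, ψ (t - c) ∂μ := by simp only [sub_add_sub_cancel]

end Symmetric

section UniformConvex

variable {E : Type*} [NormedAddCommGroup E] [NormedSpace ℝ E] {f : E → ℝ} {φ : ℝ → ℝ}

theorem uniformConvexOn_univ_of_forall_mem_Icc
    (h : ∀ α ∈ Set.Icc (0 : ℝ) 1, ∀ x y : E,
      α * (1 - α) * φ ‖x - y‖ ≤ α * f x + (1 - α) * f y - f (α • x + (1 - α) • y)) :
    UniformConvexOn Set.univ φ f := by
  refine ⟨convex_univ, fun x _ y _ a b ha hb hab => ?_⟩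
  obtain rfl : b = 1 - a := eq_sub_of_add_eq' hab
  rw [smul_eq_mul, smul_eq_mul]
  exact le_sub_comm.1 (h a ⟨ha, sub_nonneg.1 hb⟩ x y)

theorem midpoint_add_le_of_uniformConvexOn {s : Set E} (hf : UniformConvexOn s φ f) {x y : E}
    (hx : x ∈ s) (hy : y ∈ s) :
    f (midpoint ℝ x y) + 1 / 4 * φ ‖x - y‖ ≤ (f x + f y) / 2 := by
  have half : f ((1 / 2 : ℝ) • x + (1 / 2 : ℝ) • y) ≤
      (1 / 2 : ℝ) • f x + (1 / 2 : ℝ) • f y - 1 / 2 * (1 / 2) * φ ‖x - y‖ :=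
    hf.2 hx hy (by norm_num) (by norm_num) (by norm_num)
  have midpoint_eq : (1 / 2 : ℝ) • x + (1 / 2 : ℝ) • y = midpoint ℝ x y := by
    rw [midpoint_eq_smul_add, smul_add, invOf_eq_inv, one_div]
  rw [midpoint_eq, smul_eq_mul, smul_eq_mul] at half
  linarith

end UniformConvex

section MidpointConvex

variable {E : Type*} [AddCommGroup E] [Module ℝ E] [MeasurableSpace E] {ψ ω : E → ℝ}
  {μ : Measure E} [IsProbabilityMeasure μ]

theorem risk_midpoint_add_le (hconv : ∀ x y, ψ (midpoint ℝ x y) + ω (x - y) ≤ (ψ x + ψ y) / 2)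
    (hint : ∀ t, Integrable (fun c => ψ (t - c)) μ) (s t : E) :
    risk ψ μ (midpoint ℝ s t) + ω (s - t) ≤ (risk ψ μ s + risk ψ μ t) / 2 := by
  have pointwise (c : E) : ψ (midpoint ℝ s t - c) + ω (s - t) ≤ (ψ (s - c) + ψ (t - c)) / 2 := by
    have midpoint_translate : midpoint ℝ (s - c) (t - c) = midpoint ℝ s t - c := by
      simpa using (midpoint_vsub_midpoint s t c c).symm
    simpa only [midpoint_translate, sub_sub_sub_cancel_right] using hconv (s - c) (t - c)
  calc risk ψ μ (midpoint ℝ s t) + ω (s - t)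
      = ∫ c, (ψ (midpoint ℝ s t - c) + ω (s - t)) ∂μ := by
        rw [integral_add (hint _) (integrable_const _), integral_const, probReal_univ, one_smul,
          risk]
    _ ≤ ∫ c, (ψ (s - c) + ψ (t - c)) / 2 ∂μ :=
        integral_mono ((hint _).add (integrable_const _)) (((hint s).add (hint t)).div_const 2)
          pointwise
    _ = (risk ψ μ s + risk ψ μ t) / 2 := by
        rw [integral_div, integral_add (hint s) (hint t), risk, risk]

/-- `ω` is the convexity gap of the loss; a uniformly convex loss with modulus `δ₀` has
`ω v = (1 / 4) * δ₀ (‖v‖ ^ 2)`, the factor being `α * (1 - α)` at `α = 1 / 2`. -/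
theorem statement11_general [MeasurableAdd E] [MeasurableNeg E] (hψ : Function.Even ψ)
    (hω : ∀ v, 0 ≤ ω v) (hconv : ∀ x y, ψ (midpoint ℝ x y) + ω (x - y) ≤ (ψ x + ψ y) / 2)
    {m : E} (hμ : μ.map (fun c => c - m) = μ.map (fun c => m - c))
    (hint : ∀ t, Integrable (fun c => ψ (t - c)) μ) (t : E) :
    ω ((2 : ℝ) • (t - m)) ≤ risk ψ μ t - risk ψ μ m ∧ risk ψ μ m ≤ risk ψ μ t := by
  set t' := Equiv.pointReflection m t with ht'
  have midpoint_eq : midpoint ℝ t t' = m := midpoint_pointReflection_right m t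
  have sub_eq : t - t' = (2 : ℝ) • (t - m) := by
    rw [ht', Equiv.pointReflection_apply, vsub_eq_sub, vadd_eq_add, two_smul]
    abel
  have gap := risk_midpoint_add_le hconv hint t t'
  rw [midpoint_eq, sub_eq, risk_pointReflection hψ hμ, add_self_div_two] at gap
  exact ⟨le_sub_iff_add_le'.2 gap, (le_add_of_nonneg_right (hω _)).trans gap⟩

end MidpointConvex

/-- for a symmetric, uniformly convex loss `ψ` with modulus `δ₀` and a
distribution `μ` on `ℝ` symmetric about its mean `c̄`, the excess risk of any `t` is at least
`(1/4)·δ₀(4(t − c̄)²)`; in particular `c̄` minimizes `t ↦ ∫ ψ(t − c) dμ(c)`. -/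
theorem statement11 (ψ : ℝ → ℝ) (hψnn : ∀ r, 0 ≤ ψ r) (hψsym : ∀ r, ψ (-r) = ψ r)
    (δ₀ : ℝ → ℝ) (hδnn : ∀ s, 0 ≤ s → 0 ≤ δ₀ s) (hδzero : δ₀ 0 = 0)
    (hδmono : MonotoneOn δ₀ (Set.Ici 0))
    (huc : ∀ α ∈ Set.Icc (0:ℝ) 1, ∀ r r' : ℝ,
      α * (1 - α) * δ₀ (|r - r'| ^ 2)
        ≤ α * ψ r + (1 - α) * ψ r' - ψ (α * r + (1 - α) * r'))
    (μ : Measure ℝ) [IsProbabilityMeasure μ]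
    (hμint : Integrable (fun c : ℝ => c) μ)
    (hsymm : μ.map (fun c => c - ∫ x, x ∂μ) = μ.map (fun c => (∫ x, x ∂μ) - c))
    (hψint : ∀ t : ℝ, Integrable (fun c => ψ (t - c)) μ) :
    ∀ t : ℝ,
      (1 / 4) * δ₀ (4 * (t - ∫ x, x ∂μ) ^ 2)
          ≤ (∫ c, ψ (t - c) ∂μ) - ∫ c, ψ ((∫ x, x ∂μ) - c) ∂μ ∧
      (∫ c, ψ ((∫ x, x ∂μ) - c) ∂μ) ≤ ∫ c, ψ (t - c) ∂μ := by
  intro t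
  have uniformConvex : UniformConvexOn Set.univ (fun r => δ₀ (r ^ 2)) ψ :=
    uniformConvexOn_univ_of_forall_mem_Icc huc
  have gap_nonneg (v : ℝ) : 0 ≤ 1 / 4 * δ₀ (‖v‖ ^ 2) :=
    mul_nonneg (by norm_num) (hδnn _ (sq_nonneg _))
  have excess_risk := statement11_general hψsym gap_nonneg
    (fun x y => midpoint_add_le_of_uniformConvexOn uniformConvex (Set.mem_univ x) (Set.mem_univ y))
    hsymm hψint t
  rwa [Real.norm_eq_abs, sq_abs, smul_eq_mul, mul_pow, show (2 : ℝ) ^ 2 = 4 by norm_num]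
    at excess_risk
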